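/- Let c ≥ 1 be a real number and, for every n ≥ 0, let S_n be the grid graph on vertex set [-⌈cn⌉, ⌈cn⌉]² ⊆ ℤ². Then for every real number ρ with 1/(2c²) ≤ ρ ≤ 1, there exists a valid activator sequence v = (v_n)_{n≥0} in which a vertex is activated at every time step (no entry equals •) such that the burning density δ(S, v) exists and equals ρ. -/

import Mathlib

/-!
The burned set at time `n` is the union of the full `L1`-balls of radius `n - k` around the points
`v k`, `k ≤ n`, because the grid grows by at least one unit in each direction per step
(`ball_burned`, `exists_of_mem_burnSet`).

For `1 ≤ s ≤ 2 c` let `T n` be the set of points of the `n`-th grid with `L1`-norm at most `s n`.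
Its cardinality divided by `n ^ 2` tends to the area of the polygon
`{(x, y) : |x|, |y| ≤ c, |x| + |y| ≤ s}` (`tendsto_ncard_tbox`), which increases continuously from
`2` to `4 c ^ 2`, so some `s` gives density `ρ` (`exists_area_eq`). It remains to burn, up to `o(n)`,
exactly `T n`. As `c, s ≥ 1`, a fire started in `T k` at time `k` stays in `T n` at all times `n`.

At step `n` a target `τ n ∈ T n` is activated unless it burns by itself, and in that case a
fallback point `J n` is activated (`exists_activator`).
* The targets of the time interval `[q ^ 2, q ^ 2 + 2 q]` run through a square mesh of about `q`
  points, of width `o(q ^ 2)`. Hence all of `T (q ^ 2)` is burned at time `q ^ 2 + o(q ^ 2)`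
  (`exists_target`), which gives the lower bound for the density.
* The fallback points have norm at most `s n + O(√n)`, which gives the upper bound, and they are
  never reached by earlier fires, whatever these are (`exists_fallback`).
-/

open Filter Topology

namespace Burning

/-- Points of the `d`-dimensional integer lattice. -/
abbrev Pt (d : ℕ) := Fin d → ℤ

/-- The `L1`-distance between two lattice points. -/
def dist1 {d : ℕ} (x y : Pt d) : ℤ := ∑ i, |x i - y i|

/-- The `L1`-norm of a lattice point. -/
def norm1 {d : ℕ} (x : Pt d) : ℤ := ∑ i, |x i|

/-- The closed neighbourhood of the set `B` in the grid graph on the vertex set `Vn`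
(two vertices adjacent iff at `L1`-distance `1`). -/
def nbhd {d : ℕ} (Vn : Set (Pt d)) (B : Set (Pt d)) : Set (Pt d) :=
  B ∪ {x | x ∈ Vn ∧ ∃ b ∈ B, dist1 x b = 1}

/-- The burned sets of the activator sequence `v` in the sequence of grid graphs on the
vertex sets `V n`; `v n = none` means no vertex is activated at time `n` (the symbol `•`). -/
def burnSet {d : ℕ} (V : ℕ → Set (Pt d)) (v : ℕ → Option (Pt d)) : ℕ → Set (Pt d)
  | 0 => (v 0).elim ∅ (fun x => {x})
  | n + 1 => nbhd (V (n + 1)) (burnSet V v n) ∪ (v (n + 1)).elim ∅ (fun x => {x})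

/-- `v` is an activator sequence for the vertex sets `V`: every activated vertex is a
vertex of the current graph. -/
def IsActivator {d : ℕ} (V : ℕ → Set (Pt d)) (v : ℕ → Option (Pt d)) : Prop :=
  ∀ n x, v n = some x → x ∈ V n

/-- `v` is a valid activator sequence: each newly activated vertex lies in the current
vertex set and is not already burned at the current step. -/
def IsValid {d : ℕ} (V : ℕ → Set (Pt d)) (v : ℕ → Option (Pt d)) : Prop :=
  ∀ n x, v (n + 1) = some x →
    x ∈ V (n + 1) ∧ x ∉ nbhd (V (n + 1)) (burnSet V v n)

/-- The proportion of burned vertices at time `n`. -/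
noncomputable def densitySeq {d : ℕ} (V : ℕ → Set (Pt d)) (v : ℕ → Option (Pt d))
    (n : ℕ) : ℝ :=
  ((burnSet V v n).ncard : ℝ) / ((V n).ncard : ℝ)

/-- The closed `L1`-ball of radius `r` centred at `P`. -/
def ball1 {d : ℕ} (P : Pt d) (r : ℤ) : Set (Pt d) := {x | norm1 (x - P) ≤ r}

/-- The `L1`-sphere of radius `r` centred at `P`. -/
def sphere1 {d : ℕ} (P : Pt d) (r : ℤ) : Set (Pt d) := {x | norm1 (x - P) = r}

/-- The square grid `[-a, a]² ⊆ ℤ²`. -/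
def sqGrid (a : ℤ) : Set (Pt 2) := {x | ∀ i, |x i| ≤ a}

/-- The cube grid `[-a, a]^d ⊆ ℤ^d`. -/
def cubeGrid (d : ℕ) (a : ℤ) : Set (Pt d) := {x | ∀ i, |x i| ≤ a}

/-- The quadrant grid `[0, a]² ⊆ ℤ²`. -/
def quadGrid (a : ℤ) : Set (Pt 2) := {x | ∀ i, 0 ≤ x i ∧ x i ≤ a}

end Burning

namespace Burning

/-! ### The `L1`-geometry of the plane -/

lemma dist1_two (x y : Pt 2) : dist1 x y = |x 0 - y 0| + |x 1 - y 1| := by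
  simp [dist1, Fin.sum_univ_two]

lemma norm1_two (x : Pt 2) : norm1 x = |x 0| + |x 1| := by
  simp [norm1, Fin.sum_univ_two]

lemma mem_sqGrid {a : ℤ} {x : Pt 2} : x ∈ sqGrid a ↔ |x 0| ≤ a ∧ |x 1| ≤ a := by
  simp [sqGrid, Fin.forall_fin_two]

lemma dist1_triangle (x y z : Pt 2) : dist1 x z ≤ dist1 x y + dist1 y z := by
  simp only [dist1_two]
  have h0 := abs_sub_le (x 0) (y 0) (z 0)
  have h1 := abs_sub_le (x 1) (y 1) (z 1)
  omega

lemma norm1_le_add_dist1 (x y : Pt 2) : norm1 x ≤ norm1 y + dist1 x y := by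
  simp only [dist1_two, norm1_two]
  have h0 := abs_sub_abs_le_abs_sub (x 0) (y 0)
  have h1 := abs_sub_abs_le_abs_sub (x 1) (y 1)
  omega

lemma mem_sqGrid_of_dist1 {a b r : ℤ} {x y : Pt 2} (hy : y ∈ sqGrid a) (h : dist1 x y ≤ r)
    (hab : a + r ≤ b) : x ∈ sqGrid b := by
  rw [mem_sqGrid] at *
  rw [dist1_two] at h
  have h0 := abs_sub_abs_le_abs_sub (x 0) (y 0)
  have h1 := abs_sub_abs_le_abs_sub (x 1) (y 1)
  have h2 := abs_nonneg (x 0 - y 0)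
  have h3 := abs_nonneg (x 1 - y 1)
  omega

/-- A point at positive distance from `y` has a neighbour one step closer to `y`. -/
lemma exists_closer {x y : Pt 2} (h : 1 ≤ dist1 x y) :
    ∃ z : Pt 2, dist1 x z = 1 ∧ dist1 z y = dist1 x y - 1 := by
  simp only [dist1_two, abs_eq_max_neg] at *
  rcases lt_trichotomy (x 0) (y 0) with h0 | h0 | h0
  · refine ⟨![x 0 + 1, x 1], ?_⟩
    simp only [Matrix.cons_val_zero, Matrix.cons_val_one]
    omega
  · rcases lt_trichotomy (x 1) (y 1) with h1 | h1 | h1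
    · refine ⟨![x 0, x 1 + 1], ?_⟩
      simp only [Matrix.cons_val_zero, Matrix.cons_val_one]
      omega
    · omega
    · refine ⟨![x 0, x 1 - 1], ?_⟩
      simp only [Matrix.cons_val_zero, Matrix.cons_val_one]
      omega
  · refine ⟨![x 0 - 1, x 1], ?_⟩
    simp only [Matrix.cons_val_zero, Matrix.cons_val_one]
    omega

/-! ### Burned sets as unions of balls -/

/-- The property that the sequence `f` increases by at least `1` at every step, in the form in
which it is used. -/
def Grows (f : ℕ → ℤ) : Prop := ∀ j k : ℕ, j ≤ k → f j + ((k : ℤ) - j) ≤ f k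

section
variable {V : ℕ → Set (Pt 2)} {a : ℕ → ℤ}

lemma burnSet_subset (hV : ∀ n, V n = sqGrid (a n)) (ha : Grows a)
    {v : ℕ → Option (Pt 2)} (hv : IsActivator V v) (n : ℕ) : burnSet V v n ⊆ V n := by
  induction n with
  | zero =>
    intro x hx
    cases h : v 0 with
    | none => simp [burnSet, h] at hx
    | some y =>
      simp only [burnSet, h, Option.elim_some, Set.mem_singleton_iff] at hx
      exact hv 0 x (hx ▸ h)
  | succ n ih =>
    rintro x ((hx | hx) | hx)
    · have h := ih hx
      rw [hV, mem_sqGrid] at *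
      have := ha n (n + 1) (by omega)
      push_cast at this
      omega
    · exact hx.1
    · cases h : v (n + 1) with
      | none => simp [h] at hx
      | some y =>
        simp only [h, Option.elim_some, Set.mem_singleton_iff] at hx
        exact hv (n + 1) x (hx ▸ h)

/-- Since the grid grows by at least one unit in each direction at every step, its boundary never
obstructs the fire: a burned point burns a full `L1`-ball. -/
lemma ball_burned (hV : ∀ n, V n = sqGrid (a n)) (ha : Grows a)
    {v : ℕ → Option (Pt 2)} (hv : IsActivator V v) {k n : ℕ} (hkn : k ≤ n) {x y : Pt 2}
    (hy : y ∈ burnSet V v k) (hxy : dist1 x y ≤ (n : ℤ) - k) : x ∈ burnSet V v n := by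
  induction n, hkn using Nat.le_induction generalizing x with
  | base =>
    have h : dist1 x y ≤ 0 := by simpa using hxy
    rw [dist1_two] at h
    have : x = y := by
      ext i
      fin_cases i <;> simp only [Fin.zero_eta, Fin.mk_one] <;> grind
    rwa [this]
  | succ n hkn ih =>
    push_cast at hxy
    by_cases h : dist1 x y ≤ (n : ℤ) - k
    · exact Or.inl (Or.inl (ih h))
    · obtain ⟨z, hz1, hz2⟩ := exists_closer (x := x) (y := y) (by omega)
      refine Or.inl (Or.inr ⟨?_, z, ih (by omega), hz1⟩)
      have hyV := burnSet_subset hV ha hv k hy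
      rw [hV] at hyV ⊢
      refine mem_sqGrid_of_dist1 hyV hxy ?_
      have := ha k (n + 1) (by omega)
      push_cast at this
      omega

lemma exists_of_mem_burnSet {w : ℕ → Pt 2} {n : ℕ} {x : Pt 2}
    (hx : x ∈ burnSet V (fun n => some (w n)) n) : ∃ k ≤ n, dist1 x (w k) ≤ (n : ℤ) - k := by
  have hself : ∀ y : Pt 2, dist1 y y = 0 := fun y => by simp [dist1]
  induction n generalizing x with
  | zero =>
    simp only [burnSet, Option.elim_some, Set.mem_singleton_iff] at hx
    exact ⟨0, le_rfl, by simp [hx, hself]⟩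
  | succ n ih =>
    rcases hx with (hx | ⟨-, y, hy, hxy⟩) | hx
    · obtain ⟨k, hk, h⟩ := ih hx
      exact ⟨k, by omega, by push_cast; omega⟩
    · obtain ⟨k, hk, h⟩ := ih hy
      have := dist1_triangle x y (w k)
      exact ⟨k, by omega, by push_cast; omega⟩
    · simp only [Option.elim_some, Set.mem_singleton_iff] at hx
      exact ⟨n + 1, le_rfl, by simp [hx, hself]⟩

lemma exists_of_mem_nbhd {w : ℕ → Pt 2} {n : ℕ} {x : Pt 2}
    (hx : x ∈ nbhd (V (n + 1)) (burnSet V (fun n => some (w n)) n)) :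
    ∃ k ≤ n, dist1 x (w k) ≤ (n : ℤ) + 1 - k := by
  rcases hx with hx | ⟨-, y, hy, hxy⟩
  · obtain ⟨k, hk, h⟩ := exists_of_mem_burnSet hx
    exact ⟨k, hk, by omega⟩
  · obtain ⟨k, hk, h⟩ := exists_of_mem_burnSet hy
    have := dist1_triangle x y (w k)
    exact ⟨k, hk, by omega⟩

end

/-! ### Combining targets with fallback points -/

open Classical in
/-- The activated points together with the burned sets: at time `n` the target `τ n` is activated
if it is not about to burn by itself, and otherwise the fallback point `J n` is activated. -/
noncomputable def run (V : ℕ → Set (Pt 2)) (τ J : ℕ → Pt 2) : ℕ → Pt 2 × Set (Pt 2)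
  | 0 => (τ 0, {τ 0})
  | n + 1 =>
    let S := nbhd (V (n + 1)) (run V τ J n).2
    let p := if τ (n + 1) ∈ S then J (n + 1) else τ (n + 1)
    (p, S ∪ {p})

lemma burnSet_run (V : ℕ → Set (Pt 2)) (τ J : ℕ → Pt 2) (n : ℕ) :
    burnSet V (fun n => some (run V τ J n).1) n = (run V τ J n).2 := by
  induction n with
  | zero => simp [burnSet, run]
  | succ n ih => simp [burnSet, run, ih]

lemma exists_activator {V : ℕ → Set (Pt 2)} (τ J : ℕ → Pt 2)
    (hτ : ∀ n, τ n ∈ V n) (hJ : ∀ n, J n ∈ V n)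
    (hJτ : ∀ j k : ℕ, j < k → (k : ℤ) - j < dist1 (J k) (τ j))
    (hJJ : ∀ j k : ℕ, j < k → (k : ℤ) - j < dist1 (J k) (J j)) :
    ∃ v : ℕ → Option (Pt 2), IsActivator V v ∧ IsValid V v ∧ (∀ n, v n ≠ none) ∧
      (∀ n, τ n ∈ burnSet V v n) ∧
      ∀ n, ∀ x ∈ burnSet V v n, ∃ k ≤ n,
        dist1 x (τ k) ≤ (n : ℤ) - k ∨ dist1 x (J k) ≤ (n : ℤ) - k := by
  set w : ℕ → Pt 2 := fun n => (run V τ J n).1 with hw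
  have hstep : ∀ n, (τ (n + 1) ∈ nbhd (V (n + 1)) (burnSet V (fun n => some (w n)) n) ∧
      w (n + 1) = J (n + 1)) ∨
      (τ (n + 1) ∉ nbhd (V (n + 1)) (burnSet V (fun n => some (w n)) n) ∧
      w (n + 1) = τ (n + 1)) := by
    intro n
    rw [burnSet_run]
    by_cases h : τ (n + 1) ∈ nbhd (V (n + 1)) (run V τ J n).2
    · exact Or.inl ⟨h, by simp [hw, run, h]⟩
    · exact Or.inr ⟨h, by simp [hw, run, h]⟩
  have hw_or : ∀ n, w n = τ n ∨ w n = J n := by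
    intro n
    cases n with
    | zero => exact Or.inl rfl
    | succ n => exact (hstep n).symm.imp And.right And.right
  have hwV : ∀ n, w n ∈ V n := by
    intro n
    rcases hw_or n with h | h <;> rw [h]
    exacts [hτ n, hJ n]
  refine ⟨fun n => some (w n), ?_, ?_, by simp, ?_, ?_⟩
  · rintro n x hx
    obtain rfl := Option.some_injective _ hx
    exact hwV n
  · rintro n x hx
    obtain rfl := Option.some_injective _ hx
    refine ⟨hwV _, ?_⟩
    rcases hstep n with ⟨-, h⟩ | ⟨h', h⟩
    · intro hmem
      rw [h] at hmem
      obtain ⟨k, hk, hd⟩ := exists_of_mem_nbhd hmem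
      have h1 := hJτ k (n + 1) (by omega)
      have h2 := hJJ k (n + 1) (by omega)
      push_cast at h1 h2
      rcases hw_or k with e | e <;> rw [e] at hd <;> omega
    · rwa [h]
  · intro n
    cases n with
    | zero => simp [burnSet, hw, run]
    | succ n =>
      rcases hstep n with ⟨h, -⟩ | ⟨-, h⟩
      · exact Or.inl h
      · exact Or.inr (by simp [h])
  · intro n x hx
    obtain ⟨k, hk, hd⟩ := exists_of_mem_burnSet hx
    refine ⟨k, hk, ?_⟩
    rcases hw_or k with e | e <;> rw [e] at hd
    exacts [Or.inl hd, Or.inr hd]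

/-! ### Counting lattice points in truncated diamonds -/

/-- The lattice points of the square `[-a, a]²` with `L1`-norm at most `r`. -/
def tbox (a r : ℤ) : Set (Pt 2) := {x | x ∈ sqGrid a ∧ norm1 x ≤ r}

lemma mem_tbox {a r : ℤ} {x : Pt 2} :
    x ∈ tbox a r ↔ (|x 0| ≤ a ∧ |x 1| ≤ a) ∧ |x 0| + |x 1| ≤ r := by
  simp [tbox, mem_sqGrid, norm1_two]

lemma tbox_mono {a a' r r' : ℤ} (ha : a ≤ a') (hr : r ≤ r') : tbox a r ⊆ tbox a' r' := by
  intro x hx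
  rw [mem_tbox] at *
  omega

lemma tbox_two_mul (a : ℤ) : tbox a (2 * a) = sqGrid a := by
  ext x
  rw [mem_tbox, mem_sqGrid]
  omega

lemma finite_tbox (a r : ℤ) : (tbox a r).Finite := by
  refine (Set.Finite.pi' (fun _ : Fin 2 => Set.finite_Icc (-a) a)).subset ?_
  intro x hx i
  exact abs_le.1 (hx.1 i)

/-- Enumeration of a truncated diamond by columns. -/
lemma ncard_tbox_eq_sum {a r : ℤ} (har : a ≤ r) :
    ((tbox a r).ncard : ℤ) = ∑ x ∈ Finset.Icc (-a) a, (2 * min a (r - |x|) + 1) := by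
  set F : Finset (Σ _ : ℤ, ℤ) := (Finset.Icc (-a) a).sigma
    fun x => Finset.Icc (-min a (r - |x|)) (min a (r - |x|)) with hF
  have h : tbox a r = (fun p : (Σ _ : ℤ, ℤ) => (![p.1, p.2] : Pt 2)) '' (F : Set (Σ _ : ℤ, ℤ)) := by
    ext x
    simp only [mem_tbox, hF, Set.mem_image, Finset.mem_coe, Finset.mem_sigma, Finset.mem_Icc,
      ← abs_le]
    constructor
    · rintro ⟨⟨h0, h1⟩, h2⟩
      refine ⟨⟨x 0, x 1⟩, ⟨h0, by dsimp only; omega⟩, ?_⟩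
      ext i
      fin_cases i <;> rfl
    · rintro ⟨⟨p, q⟩, ⟨h0, h1⟩, rfl⟩
      simp only [Matrix.cons_val_zero, Matrix.cons_val_one] at *
      omega
  have hinj : Function.Injective (fun p : (Σ _ : ℤ, ℤ) => (![p.1, p.2] : Pt 2)) := by
    rintro ⟨p, q⟩ ⟨p', q'⟩ h
    have h0 := congrFun h 0
    have h1 := congrFun h 1
    simp only [Matrix.cons_val_zero, Matrix.cons_val_one] at h0 h1
    subst h0 h1
    rfl
  rw [h, Set.ncard_image_of_injective _ hinj, Set.ncard_coe_finset, hF, Finset.card_sigma]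
  push_cast
  refine Finset.sum_congr rfl fun x hx => ?_
  rw [Finset.mem_Icc, ← abs_le] at hx
  have := abs_nonneg x
  rw [Int.card_Icc, Int.toNat_of_nonneg] <;> omega

lemma sum_columns (b d : ℕ) :
    ∑ x ∈ Finset.Icc (-((b : ℤ) + d)) (b + d), (2 * min ((b : ℤ) + d) (2 * b + d - |x|) + 1)
      = (2 * ((b : ℤ) + d) + 1) ^ 2 - 2 * d * (d + 1) := by
  induction d with
  | zero =>
    have : ∀ x ∈ Finset.Icc (-((b : ℤ) + (0 : ℕ))) (b + (0 : ℕ)),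
        (2 * min ((b : ℤ) + (0 : ℕ)) (2 * b + (0 : ℕ) - |x|) + 1) = 2 * b + 1 := by
      intro x hx
      rw [Finset.mem_Icc, ← abs_le] at hx
      push_cast at *
      omega
    rw [Finset.sum_congr rfl this, Finset.sum_const, Int.card_Icc, nsmul_eq_mul,
      Int.toNat_of_nonneg (by omega)]
    push_cast
    ring
  | succ d ih =>
    have hI : Finset.Icc (-((b : ℤ) + (d + 1 : ℕ))) (b + (d + 1 : ℕ)) =
        insert (-((b : ℤ) + d + 1)) (insert ((b : ℤ) + d + 1)
          (Finset.Icc (-((b : ℤ) + d)) (b + d))) := by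
      ext x
      simp only [Finset.mem_insert, Finset.mem_Icc]
      push_cast
      omega
    have hstep : ∀ x ∈ Finset.Icc (-((b : ℤ) + d)) (b + d),
        (2 * min ((b : ℤ) + (d + 1 : ℕ)) (2 * b + (d + 1 : ℕ) - |x|) + 1) =
        (2 * min ((b : ℤ) + d) (2 * b + d - |x|) + 1) + 2 := by
      intro x _
      push_cast
      omega
    rw [hI, Finset.sum_insert, Finset.sum_insert, Finset.sum_congr rfl hstep,
      Finset.sum_add_distrib, ih, Finset.sum_const, Int.card_Icc, nsmul_eq_mul,
      Int.toNat_of_nonneg (by omega), abs_neg, abs_of_nonneg (by omega : (0 : ℤ) ≤ b + d + 1),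
      min_eq_right (by push_cast; omega)]
    · push_cast
      ring
    · simp
    · simp only [Finset.mem_insert, Finset.mem_Icc]
      omega

/-- The polynomial counting the points of a truncated diamond, for `m ≤ r ≤ 2 m`. -/
lemma ncard_tbox_of_le {m r : ℤ} (h1 : m ≤ r) (h2 : r ≤ 2 * m) :
    ((tbox m r).ncard : ℤ) = (2 * m + 1) ^ 2 - 2 * (2 * m - r) * (2 * m - r + 1) := by
  obtain ⟨b, hb⟩ := Int.eq_ofNat_of_zero_le (by omega : 0 ≤ r - m)
  obtain ⟨d, hd⟩ := Int.eq_ofNat_of_zero_le (by omega : 0 ≤ 2 * m - r)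
  have h := sum_columns b d
  rw [ncard_tbox_eq_sum h1]
  rw [show (b : ℤ) + d = m by omega, show 2 * (b : ℤ) + d = r by omega] at h
  rw [h, hd]

/-- Replacing the norm bound by `min r (2 a)` and the side by the resulting norm bound, if that is
smaller, does not change a truncated diamond. -/
lemma tbox_normalize {a r : ℤ} :
    tbox a r = tbox (min a (min r (2 * a))) (min r (2 * a)) := by
  ext x
  rw [mem_tbox, mem_tbox]
  have := abs_nonneg (x 0)
  have := abs_nonneg (x 1)
  omega

/-- The area of `{(x, y) : |x|, |y| ≤ α, |x| + |y| ≤ β}`, for `α, β ≥ 0`. -/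
noncomputable def area (α β : ℝ) : ℝ :=
  4 * (min α (min β (2 * α))) ^ 2 - 2 * (2 * min α (min β (2 * α)) - min β (2 * α)) ^ 2

lemma continuous_area : Continuous fun p : ℝ × ℝ => area p.1 p.2 := by
  unfold area
  fun_prop

/-- The number of lattice points of truncated diamonds grows like the area. -/
lemma tendsto_ncard_tbox {f g : ℕ → ℤ} {α β : ℝ} (hf0 : ∀ n, 0 ≤ f n) (hg0 : ∀ n, 0 ≤ g n)
    (hf : Tendsto (fun n : ℕ => (f n : ℝ) / n) atTop (𝓝 α))
    (hg : Tendsto (fun n : ℕ => (g n : ℝ) / n) atTop (𝓝 β)) :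
    Tendsto (fun n : ℕ => ((tbox (f n) (g n)).ncard : ℝ) / (n : ℝ) ^ 2) atTop
      (𝓝 (area α β)) := by
  have hr : Tendsto (fun n : ℕ => min ((g n : ℝ) / n) (2 * ((f n : ℝ) / n))) atTop
      (𝓝 (min β (2 * α))) := hg.min (hf.const_mul 2)
  have hm := hf.min hr
  have hi : Tendsto (fun n : ℕ => (1 : ℝ) / n) atTop (𝓝 0) := tendsto_one_div_atTop_nhds_zero_nat
  have key := (((hm.const_mul 2).add hi).pow 2).sub
    ((((hm.const_mul 2).sub hr).mul (((hm.const_mul 2).sub hr).add hi)).const_mul 2)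
  have e : (2 * min α (min β (2 * α)) + 0) ^ 2 - 2 * ((2 * min α (min β (2 * α)) - min β (2 * α)) *
      (2 * min α (min β (2 * α)) - min β (2 * α) + 0)) = area α β := by
    unfold area
    ring
  rw [e] at key
  refine key.congr' ?_
  filter_upwards [eventually_gt_atTop 0] with n hn
  have hn' : (0 : ℝ) < n := by exact_mod_cast hn
  have hcount := ncard_tbox_of_le (m := min (f n) (min (g n) (2 * f n)))
    (r := min (g n) (2 * f n)) (by omega) (by have := hf0 n; have := hg0 n; omega)
  rw [← tbox_normalize] at hcount
  have hcount' := congrArg (Int.cast (R := ℝ)) hcount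
  rw [Int.cast_natCast] at hcount'
  have h1 : min ((g n : ℝ) / n) (2 * ((f n : ℝ) / n)) = min (g n : ℝ) (2 * f n) / n := by
    rw [← mul_div_assoc, min_div_div_right hn'.le]
  rw [h1, min_div_div_right hn'.le, hcount']
  push_cast
  field_simp

lemma area_two_mul {α : ℝ} (hα : 0 ≤ α) : area α (2 * α) = 4 * α ^ 2 := by
  rw [area, min_self, min_eq_left (by linarith)]
  ring

lemma area_one {α : ℝ} (hα : 1 ≤ α) : area α 1 = 2 := by
  rw [area, min_eq_left (by linarith : 1 ≤ 2 * α), min_eq_right hα]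
  norm_num

lemma exists_area_eq {c ρ : ℝ} (hc : 1 ≤ c) (h1 : 1 / (2 * c ^ 2) ≤ ρ) (h2 : ρ ≤ 1) :
    ∃ s, 1 ≤ s ∧ s ≤ 2 * c ∧ area c s = 4 * c ^ 2 * ρ := by
  have hcont : ContinuousOn (fun s => area c s) (Set.Icc 1 (2 * c)) :=
    (continuous_area.comp (Continuous.prodMk_right c)).continuousOn
  have hmem : 4 * c ^ 2 * ρ ∈ Set.Icc (area c 1) (area c (2 * c)) := by
    rw [area_one hc, area_two_mul (by linarith)]
    rw [div_le_iff₀ (by positivity)] at h1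
    constructor <;> nlinarith [sq_nonneg c]
  obtain ⟨s, hs, h⟩ := intermediate_value_Icc (by linarith) hcont hmem
  exact ⟨s, hs.1, hs.2, h⟩

/-! ### Asymptotics of rounded sequences -/

lemma grows_ceil {c : ℝ} (hc : 1 ≤ c) : Grows fun n => ⌈c * n⌉ := by
  intro j k hjk
  have hjk' : (j : ℝ) ≤ k := by exact_mod_cast hjk
  rw [← Int.ceil_add_intCast]
  refine Int.ceil_mono ?_
  push_cast
  nlinarith

lemma grows_floor {s : ℝ} (hs : 1 ≤ s) : Grows fun n => ⌊s * n⌋ := by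
  intro j k hjk
  have hjk' : (j : ℝ) ≤ k := by exact_mod_cast hjk
  rw [← Int.floor_add_intCast]
  refine Int.floor_mono ?_
  push_cast
  nlinarith

lemma tendsto_ceil_div (c : ℝ) :
    Tendsto (fun n : ℕ => (⌈c * n⌉ : ℝ) / n) atTop (𝓝 c) := by
  have hi : Tendsto (fun n : ℕ => c + (1 : ℝ) / n) atTop (𝓝 c) := by
    simpa using tendsto_one_div_atTop_nhds_zero_nat.const_add c
  refine tendsto_of_tendsto_of_tendsto_of_le_of_le' tendsto_const_nhds hi ?_ ?_ <;>
  filter_upwards [eventually_gt_atTop 0] with n hn <;>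
  have hn' : (0 : ℝ) < n := by exact_mod_cast hn
  · rw [le_div_iff₀ hn']
    exact Int.le_ceil _
  · rw [div_le_iff₀ hn', add_mul, one_div_mul_cancel hn'.ne']
    exact (Int.ceil_lt_add_one _).le

lemma tendsto_floor_div (s : ℝ) :
    Tendsto (fun n : ℕ => (⌊s * n⌋ : ℝ) / n) atTop (𝓝 s) := by
  have h := (tendsto_ceil_div (-s)).neg
  rw [neg_neg] at h
  refine h.congr fun n => ?_
  rw [neg_mul, Int.ceil_neg]
  push_cast
  ring

lemma tendsto_nat_sqrt : Tendsto Nat.sqrt atTop atTop :=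
  tendsto_atTop.2 fun b => by
    filter_upwards [eventually_ge_atTop (b ^ 2)] with n hn
    exact Nat.le_sqrt'.2 hn

lemma tendsto_sqrt_div : Tendsto (fun n : ℕ => (Nat.sqrt n : ℝ) / n) atTop (𝓝 0) := by
  have h : Tendsto (fun n : ℕ => (1 : ℝ) / Nat.sqrt n) atTop (𝓝 0) :=
    tendsto_one_div_atTop_nhds_zero_nat.comp tendsto_nat_sqrt
  refine tendsto_of_tendsto_of_tendsto_of_le_of_le' tendsto_const_nhds h
    (Eventually.of_forall fun n => by positivity) ?_
  filter_upwards [eventually_gt_atTop 0] with n hn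
  have hn' : (0 : ℝ) < n := by exact_mod_cast hn
  have hq : (0 : ℝ) < Nat.sqrt n := by exact_mod_cast Nat.sqrt_pos.2 hn
  rw [div_le_div_iff₀ hn' hq, one_mul]
  exact_mod_cast Nat.sqrt_le n

lemma tendsto_sqrt_sq_div :
    Tendsto (fun n : ℕ => ((Nat.sqrt n ^ 2 : ℕ) : ℝ) / n) atTop (𝓝 1) := by
  have h : Tendsto (fun n : ℕ => 1 - 2 * ((Nat.sqrt n : ℝ) / n)) atTop (𝓝 1) := by
    simpa using (tendsto_sqrt_div.const_mul 2).const_sub 1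
  refine tendsto_of_tendsto_of_tendsto_of_le_of_le' h tendsto_const_nhds ?_ ?_ <;>
  filter_upwards [eventually_gt_atTop 0] with n hn <;>
  have hn' : (0 : ℝ) < n := by exact_mod_cast hn
  · have h2 : (n : ℝ) ≤ Nat.sqrt n * Nat.sqrt n + Nat.sqrt n + Nat.sqrt n := by
      exact_mod_cast Nat.sqrt_le_add n
    rw [le_div_iff₀ hn', sub_mul, mul_assoc, div_mul_cancel₀ _ hn'.ne']
    push_cast
    nlinarith
  · rw [div_le_one hn']
    exact_mod_cast Nat.sqrt_le' n

/-! ### Fallback points -/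

lemma dist_corner {a b : ℤ} {x : Pt 2} (hx : x ∈ sqGrid b) :
    2 * (a - b) ≤ dist1 ![a, a] x := by
  rw [mem_sqGrid] at hx
  rw [dist1_two]
  simp only [Matrix.cons_val_zero, Matrix.cons_val_one]
  have h0 := le_abs_self (x 0)
  have h1 := le_abs_self (x 1)
  have h2 := le_abs_self (a - x 0)
  have h3 := le_abs_self (a - x 1)
  omega

/-- There are points `J k` of the `k`-th grid, of `L1`-norm at most `s k + o(k)`, which are out of
reach at time `k` of a fire started at any earlier time `j` either at `J j` or at a point of norm
at most `s j`.

If `s = 2 c`, corners of the grids do. Otherwise `J k` lies, for large `k`, on the sphere of radius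
`⌊s k⌋ + √k + 1` in the negative quadrant: earlier fires are too far away whenever the integer part
of `√k` has increased in the meantime, and on the intervals where it is constant the points `J k`
move along the sphere, with first coordinate increasing. For the finitely many small `k` for which
the sphere does not have enough room in the grid, `J k` is the opposite corner. -/
lemma exists_fallback {c s : ℝ} (hc : 1 ≤ c) (hs : 1 ≤ s) (hsc : s ≤ 2 * c) :
    ∃ (J : ℕ → Pt 2) (C : ℤ), 0 ≤ C ∧ (∀ k : ℕ, J k ∈ sqGrid ⌈c * k⌉) ∧
      (∀ j k : ℕ, j < k → ∀ x ∈ tbox ⌈c * j⌉ ⌊s * j⌋, (k : ℤ) - j < dist1 (J k) x) ∧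
      (∀ j k : ℕ, j < k → (k : ℤ) - j < dist1 (J k) (J j)) ∧
      ∀ k : ℕ, norm1 (J k) ≤ ⌊s * k⌋ + C + Nat.sqrt k := by
  have hcorner : ∀ k : ℕ, (![⌈c * k⌉, ⌈c * k⌉] : Pt 2) ∈ sqGrid ⌈c * k⌉ := by
    intro k
    have : 0 ≤ ⌈c * k⌉ := Int.ceil_nonneg (by positivity)
    rw [mem_sqGrid]
    simp [abs_of_nonneg this]
  have hcnorm : ∀ k : ℕ, norm1 (![⌈c * k⌉, ⌈c * k⌉] : Pt 2) = 2 * ⌈c * k⌉ := by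
    intro k
    have : 0 ≤ ⌈c * k⌉ := Int.ceil_nonneg (by positivity)
    rw [norm1_two]
    simp only [Matrix.cons_val_zero, Matrix.cons_val_one, abs_of_nonneg this]
    ring
  have hcdist : ∀ j k : ℕ, j < k → ∀ x ∈ sqGrid ⌈c * j⌉,
      (k : ℤ) - j < dist1 (![⌈c * k⌉, ⌈c * k⌉] : Pt 2) x := by
    intro j k hjk x hx
    have h1 := dist_corner (a := ⌈c * k⌉) hx
    have h2 := grows_ceil hc j k hjk.le
    simp only at h2
    omega
  rcases hsc.eq_or_lt with rfl | hlt
  · refine ⟨fun k => ![⌈c * k⌉, ⌈c * k⌉], 2, by norm_num, hcorner,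
      fun j k hjk x hx => hcdist j k hjk x hx.1,
      fun j k hjk => hcdist j k hjk _ (hcorner j), fun k => ?_⟩
    rw [hcnorm]
    have h1 : 2 * ⌈c * k⌉ ≤ ⌊2 * c * k⌋ + 2 := by
      rw [← sub_le_iff_le_add, Int.le_floor]
      push_cast
      linarith [Int.ceil_lt_add_one (c * k)]
    omega
  · set X : ℕ → ℤ := fun k => ⌊s * (Nat.sqrt k : ℝ) ^ 2 / 2⌋ + ((Nat.sqrt k : ℤ) + 1) ^ 2 - k
      with hX
    set m : ℕ → ℤ := fun k => ⌊s * k⌋ + Nat.sqrt k + 1 with hm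
    have hX0 : ∀ k, 0 ≤ X k := by
      intro k
      have h1 : 0 ≤ ⌊s * (Nat.sqrt k : ℝ) ^ 2 / 2⌋ := Int.floor_nonneg.2 (by positivity)
      have h2 : (k : ℤ) < ((Nat.sqrt k : ℤ) + 1) * (Nat.sqrt k + 1) := by
        exact_mod_cast Nat.lt_succ_sqrt k
      simp only [hX]
      nlinarith
    have hroom : ∀ᶠ k : ℕ in atTop, X k ≤ ⌈c * k⌉ ∧ X k ≤ m k ∧ m k - X k ≤ ⌈c * k⌉ := by
      have hlim : Tendsto (fun k : ℕ => (s + 3) * ((Nat.sqrt k : ℝ) / k + 1 / k)) atTop (𝓝 0) := by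
        simpa using (tendsto_sqrt_div.add tendsto_one_div_atTop_nhds_zero_nat).const_mul (s + 3)
      have hpos : 0 < min (c - s / 2) (1 / 2) := lt_min (by linarith) (by norm_num)
      filter_upwards [hlim.eventually_lt_const hpos, eventually_gt_atTop 0] with k hk hk0
      have hk' : (0 : ℝ) < k := by exact_mod_cast hk0
      rw [← add_div, ← mul_div_assoc, div_lt_iff₀ hk'] at hk
      have hk1 := hk.trans_le (mul_le_mul_of_nonneg_right (min_le_left _ _) hk'.le)
      have hk2 := hk.trans_le (mul_le_mul_of_nonneg_right (min_le_right _ _) hk'.le)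
      have hq0 : (0 : ℝ) ≤ Nat.sqrt k := by positivity
      have hq1 : (Nat.sqrt k : ℝ) ^ 2 ≤ k := by exact_mod_cast Nat.sqrt_le' k
      have hq2 : (k : ℝ) ≤ Nat.sqrt k * Nat.sqrt k + Nat.sqrt k + Nat.sqrt k := by
        exact_mod_cast Nat.sqrt_le_add k
      have hXr : (X k : ℝ) = ⌊s * (Nat.sqrt k : ℝ) ^ 2 / 2⌋ + ((Nat.sqrt k : ℝ) + 1) ^ 2 - k := by
        simp only [hX]
        push_cast
        ring
      have hmr : (m k : ℝ) = ⌊s * k⌋ + Nat.sqrt k + 1 := by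
        simp only [hm]
        push_cast
        ring
      have f1 := Int.floor_le (s * (Nat.sqrt k : ℝ) ^ 2 / 2)
      have f2 := Int.lt_floor_add_one (s * (Nat.sqrt k : ℝ) ^ 2 / 2)
      have f3 := Int.floor_le (s * k)
      have f4 := Int.lt_floor_add_one (s * k)
      have f5 := Int.le_ceil (c * k)
      have g1 : s * (Nat.sqrt k : ℝ) ^ 2 ≤ s * k := by gcongr
      have g2 : s * k ≤ s * (Nat.sqrt k : ℝ) ^ 2 + 2 * (s * Nat.sqrt k) := by nlinarith
      have g3 : (0 : ℝ) ≤ s * Nat.sqrt k := by positivity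
      have g4 : (k : ℝ) ≤ s * k := by nlinarith
      refine ⟨?_, ?_, ?_⟩
      · have : (X k : ℝ) ≤ ⌈c * k⌉ := by
          rw [hXr]
          nlinarith
        exact_mod_cast this
      · have : (X k : ℝ) ≤ m k := by
          rw [hXr, hmr]
          nlinarith
        exact_mod_cast this
      · have : (m k - X k : ℝ) ≤ ⌈c * k⌉ := by
          rw [hXr, hmr]
          nlinarith
        exact_mod_cast this
    obtain ⟨K, hK⟩ := eventually_atTop.1 hroom
    set P : ℕ → Pt 2 := fun k => ![-X k, -(m k - X k)] with hP
    have hPnorm : ∀ k, K ≤ k → norm1 (P k) = m k := by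
      intro k hk
      have := hX0 k
      have := (hK k hk).2.1
      simp only [norm1_two, hP, Matrix.cons_val_zero, Matrix.cons_val_one, abs_neg]
      rw [abs_of_nonneg (by omega), abs_of_nonneg (by omega)]
      ring
    have hPtarget : ∀ j k : ℕ, K ≤ k → j < k → ∀ x : Pt 2, norm1 x ≤ ⌊s * j⌋ →
        (k : ℤ) - j < dist1 (P k) x := by
      intro j k hk hjk x hx
      have h1 := norm1_le_add_dist1 (P k) x
      have h2 := grows_floor hs j k hjk.le
      rw [hPnorm k hk] at h1
      simp only [hm] at h1 h2
      omega
    refine ⟨fun k => if k < K then ![⌈c * k⌉, ⌈c * k⌉] else P k, 2 * ⌈c * K⌉ + 1, ?_, ?_, ?_, ?_, ?_⟩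
    · have : 0 ≤ ⌈c * K⌉ := Int.ceil_nonneg (by positivity)
      omega
    · intro k
      dsimp only
      split_ifs with h
      · exact hcorner k
      · have h0 := hX0 k
        obtain ⟨h1, h2, h3⟩ := hK k (not_lt.1 h)
        rw [mem_sqGrid]
        simp only [hP, Matrix.cons_val_zero, Matrix.cons_val_one, abs_neg]
        rw [abs_of_nonneg (by omega), abs_of_nonneg (by omega)]
        exact ⟨h1, h3⟩
    · intro j k hjk x hx
      dsimp only
      split_ifs with h
      · exact hcdist j k hjk x hx.1
      · exact hPtarget j k (not_lt.1 h) hjk x hx.2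
    · intro j k hjk
      dsimp only
      by_cases h : k < K
      · rw [if_pos h, if_pos (hjk.trans h)]
        exact hcdist j k hjk _ (hcorner j)
      rw [if_neg h]
      have hXk := hX0 k
      obtain ⟨-, hk2, -⟩ := hK k (not_lt.1 h)
      have hmono : m j + ((k : ℤ) - j) ≤ m k := by
        have h1 := grows_floor hs j k hjk.le
        have h2 := Nat.sqrt_le_sqrt hjk.le
        simp only [hm] at h1 ⊢
        omega
      by_cases hj : j < K
      · rw [if_pos hj]
        -- The points lie in opposite quadrants, so their distance is the sum of their norms.
        have ha : 0 ≤ ⌈c * j⌉ := Int.ceil_nonneg (by positivity)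
        have hmj : 0 < m j := by
          have : 0 ≤ ⌊s * j⌋ := Int.floor_nonneg.2 (by positivity)
          simp only [hm]
          omega
        simp only [dist1_two, hP, Matrix.cons_val_zero, Matrix.cons_val_one, abs_eq_max_neg]
        omega
      · rw [if_neg hj]
        rcases (Nat.sqrt_le_sqrt hjk.le).eq_or_lt with hq | hq
        · have hXlt : X k < X j := by
            simp only [hX, hq]
            omega
          simp only [dist1_two, hP, Matrix.cons_val_zero, Matrix.cons_val_one, abs_eq_max_neg]
          omega
        · have h1 := norm1_le_add_dist1 (P k) (P j)
          rw [hPnorm k (not_lt.1 h), hPnorm j (not_lt.1 hj)] at h1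
          have h2 := grows_floor hs j k hjk.le
          simp only [hm] at h1 h2
          omega
    · intro k
      dsimp only
      split_ifs with h
      · rw [hcnorm]
        have h1 := grows_ceil hc k K h.le
        have h2 : 0 ≤ ⌊s * k⌋ := Int.floor_nonneg.2 (by positivity)
        simp only at h1
        omega
      · rw [hPnorm k (not_lt.1 h)]
        have : 0 ≤ ⌈c * K⌉ := Int.ceil_nonneg (by positivity)
        simp only [hm]
        omega

/-! ### Target points -/

/-- Rounding towards zero to a multiple of the mesh `D`. -/
lemma exists_round {D h x : ℤ} (hD : 0 < D) (hx : |x| ≤ D * h) :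
    ∃ p : ℤ, |p| ≤ h ∧ |D * p| ≤ |x| ∧ |x - D * p| ≤ D := by
  have key : ∀ y : ℤ, 0 ≤ y → y ≤ D * h → 0 ≤ y / D ∧ y / D ≤ h ∧ 0 ≤ D * (y / D) ∧
      D * (y / D) ≤ y ∧ y < D * (y / D) + D := by
    intro y hy hyh
    have h1 : 0 ≤ y / D := Int.ediv_nonneg hy hD.le
    exact ⟨h1, Int.ediv_le_of_le_mul hD (by linarith), by positivity, Int.mul_ediv_self_le hD.ne',
      Int.lt_mul_ediv_self_add hD⟩
  rcases le_total 0 x with h0 | h0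
  · obtain ⟨h1, h2, h3, h4, h5⟩ := key x h0 (by rwa [abs_of_nonneg h0] at hx)
    refine ⟨x / D, ?_⟩
    simp only [abs_eq_max_neg]
    omega
  · obtain ⟨h1, h2, h3, h4, h5⟩ := key (-x) (by omega) (by rwa [abs_of_nonpos h0] at hx)
    refine ⟨-(-x / D), ?_⟩
    simp only [abs_eq_max_neg, mul_neg]
    omega

/-- The integer `h` for which the mesh of targets used on the time interval `[q ^ 2, q ^ 2 + 2 q]`
has `(2 h + 1) ^ 2` points. For `q ≥ 4` this is at most `2 q + 1`, the length of the interval. -/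
def half (q : ℕ) : ℕ := Nat.sqrt q / 2

/-- The mesh width of the targets used on the time interval `[q ^ 2, q ^ 2 + 2 q]`, large enough
for the mesh to cover the grid of time `q ^ 2`. For `q < 4` the divisor `half q` is `0` and the
value is `1`. -/
noncomputable def mesh (c : ℝ) (q : ℕ) : ℤ := ⌈c * (q ^ 2 : ℕ)⌉ / half q + 1

/-- On the time interval `[q ^ 2, q ^ 2 + 2 q]`, the points with both coordinates in
`{-h, …, h}`, `h = half q`, multiplied by the mesh, are listed row by row. -/
noncomputable def gridPt (c : ℝ) (k : ℕ) : Pt 2 :=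
  ![mesh c (Nat.sqrt k) * (((k - Nat.sqrt k ^ 2) / (2 * half (Nat.sqrt k) + 1) : ℕ)
      - half (Nat.sqrt k)),
    mesh c (Nat.sqrt k) * (((k - Nat.sqrt k ^ 2) % (2 * half (Nat.sqrt k) + 1) : ℕ)
      - half (Nat.sqrt k))]

lemma tendsto_half : Tendsto half atTop atTop :=
  (Nat.tendsto_div_const_atTop (by norm_num : (2 : ℕ) ≠ 0)).comp tendsto_nat_sqrt

lemma mesh_pos {c : ℝ} (hc : 1 ≤ c) (q : ℕ) : 0 < mesh c q := by
  have h : 0 ≤ ⌈c * (q ^ 2 : ℕ)⌉ := Int.ceil_nonneg (by positivity)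
  have : 0 ≤ ⌈c * (q ^ 2 : ℕ)⌉ / (half q : ℤ) := Int.ediv_nonneg h (by positivity)
  unfold mesh
  omega

lemma tendsto_mesh {c : ℝ} (hc : 1 ≤ c) :
    Tendsto (fun q : ℕ => (mesh c q : ℝ) / (q : ℝ) ^ 2) atTop (𝓝 0) := by
  have h1 : Tendsto (fun q : ℕ => (c + 1) * (1 / (half q : ℝ)) + (1 / (q : ℝ)) ^ 2) atTop
      (𝓝 0) := by
    simpa using ((tendsto_one_div_atTop_nhds_zero_nat.comp tendsto_half).const_mul (c + 1)).add
      ((tendsto_one_div_atTop_nhds_zero_nat (𝕜 := ℝ)).pow 2)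
  refine tendsto_of_tendsto_of_tendsto_of_le_of_le' tendsto_const_nhds h1 ?_ ?_
  · refine Eventually.of_forall fun q => ?_
    have : (0 : ℝ) < mesh c q := by exact_mod_cast mesh_pos hc q
    positivity
  · filter_upwards [tendsto_half.eventually_gt_atTop 0, eventually_gt_atTop 0] with q hh hq
    have hh' : (0 : ℝ) < half q := by exact_mod_cast hh
    have hq' : (1 : ℝ) ≤ q := by exact_mod_cast hq
    have e1 : (mesh c q : ℝ) * half q ≤ ⌈c * (q ^ 2 : ℕ)⌉ + half q := by
      have : mesh c q * half q ≤ ⌈c * (q ^ 2 : ℕ)⌉ + half q := by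
        have := Int.ediv_mul_le ⌈c * (q ^ 2 : ℕ)⌉ (b := (half q : ℤ)) (by omega)
        unfold mesh
        linarith
      exact_mod_cast this
    have e2 := Int.ceil_lt_add_one (c * (q ^ 2 : ℕ))
    push_cast at e1 e2
    have e3 : (1 : ℝ) ≤ (q : ℝ) ^ 2 := one_le_pow₀ hq'
    have hq2 : (0 : ℝ) < (q : ℝ) ^ 2 := by positivity
    rw [div_le_iff₀ hq2]
    have e4 : ((c + 1) * (1 / (half q : ℝ)) + (1 / (q : ℝ)) ^ 2) * (q : ℝ) ^ 2 =
        ((c + 1) * (q : ℝ) ^ 2 + half q) / half q := by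
      field_simp
    rw [e4, le_div_iff₀ hh']
    linarith

open Classical in
/-- The target of step `k`: the grid point of that step if it lies in the truncated diamond, and
the origin otherwise. -/
noncomputable def target (c s : ℝ) (k : ℕ) : Pt 2 :=
  if gridPt c k ∈ tbox ⌈c * k⌉ ⌊s * k⌋ then gridPt c k else 0

lemma target_mem {c s : ℝ} (hc : 1 ≤ c) (hs : 1 ≤ s) (k : ℕ) :
    target c s k ∈ tbox ⌈c * k⌉ ⌊s * k⌋ := by
  unfold target
  split_ifs with h
  · exact h
  · have h1 : 0 ≤ ⌈c * k⌉ := Int.ceil_nonneg (by positivity)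
    have h2 : 0 ≤ ⌊s * k⌋ := Int.floor_nonneg.2 (by positivity)
    rw [mem_tbox]
    simp [h1, h2]

/-- The targets of the time interval `[q ^ 2, q ^ 2 + 2 q]` come close to all points of the
truncated diamond of time `q ^ 2`. Rounding towards zero ensures that the grid point near a point
of the diamond is itself in the diamond. -/
lemma exists_target {c s : ℝ} (hc : 1 ≤ c) (hs : 1 ≤ s) {q : ℕ} (hq : 4 ≤ q) {x : Pt 2}
    (hx : x ∈ tbox ⌈c * (q ^ 2 : ℕ)⌉ ⌊s * (q ^ 2 : ℕ)⌋) :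
    ∃ k, q ^ 2 ≤ k ∧ k ≤ q ^ 2 + 2 * q ∧ dist1 x (target c s k) ≤ 2 * mesh c q := by
  have hh1 : 1 ≤ half q := by
    have : 2 ≤ Nat.sqrt q := Nat.le_sqrt.2 hq
    unfold half
    omega
  have hh2 : 2 * half q * (half q + 1) ≤ q := by
    have h1 : 2 * half q ≤ Nat.sqrt q := by unfold half; omega
    have h2 := Nat.sqrt_le q
    nlinarith
  have hD := mesh_pos hc q
  have hsize : ⌈c * (q ^ 2 : ℕ)⌉ ≤ mesh c q * half q := by
    have := Int.lt_ediv_add_one_mul_self ⌈c * (q ^ 2 : ℕ)⌉ (b := (half q : ℤ)) (by omega)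
    exact this.le
  have hx' := mem_tbox.1 hx
  obtain ⟨p, hp1, hp2, hp3⟩ := exists_round hD (hx'.1.1.trans hsize)
  obtain ⟨r, hr1, hr2, hr3⟩ := exists_round hD (hx'.1.2.trans hsize)
  rw [abs_le] at hp1 hr1
  obtain ⟨i, hi⟩ := Int.eq_ofNat_of_zero_le (by omega : 0 ≤ p + half q)
  obtain ⟨j, hj⟩ := Int.eq_ofNat_of_zero_le (by omega : 0 ≤ r + half q)
  set w := 2 * half q + 1 with hw
  have hiw : i ≤ 2 * half q := by omega
  have hjw : j < w := by omega
  have ht : w * i + j ≤ 2 * q := by nlinarith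
  set k := q * q + (w * i + j) with hk
  have hsqrt : Nat.sqrt k = q := Nat.sqrt_add_eq q (by omega)
  have hkq : q ^ 2 ≤ k := by rw [hk, pow_two]; omega
  have hgrid : gridPt c k = ![mesh c q * p, mesh c q * r] := by
    have h1 : k - q ^ 2 = w * i + j := by rw [hk, pow_two]; omega
    have h2 : (w * i + j) / w = i := by
      rw [Nat.mul_add_div (by omega), Nat.div_eq_of_lt hjw, add_zero]
    have h3 : (w * i + j) % w = j := by
      rw [Nat.mul_add_mod, Nat.mod_eq_of_lt hjw]
    rw [gridPt, hsqrt, ← hw, h1, h2, h3]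
    have e1 : (i : ℤ) - half q = p := by omega
    have e2 : (j : ℤ) - half q = r := by omega
    rw [e1, e2]
  have hmem : gridPt c k ∈ tbox ⌈c * k⌉ ⌊s * k⌋ := by
    have h1 := grows_ceil hc _ _ hkq
    have h2 := grows_floor hs _ _ hkq
    have h3 : ((q ^ 2 : ℕ) : ℤ) ≤ k := by exact_mod_cast hkq
    simp only at h1 h2
    rw [hgrid, mem_tbox]
    simp only [Matrix.cons_val_zero, Matrix.cons_val_one]
    omega
  refine ⟨k, hkq, by rw [hk, pow_two]; omega, ?_⟩
  rw [target, if_pos hmem, hgrid, dist1_two]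
  simp only [Matrix.cons_val_zero, Matrix.cons_val_one]
  omega

/-- For `t < 1`, the times `q ^ 2 ≈ t n` precede `n` by enough for the fires started at the targets
of the time interval `[q ^ 2, q ^ 2 + 2 q]` to fill the gaps between them. -/
lemma exists_times {c t : ℝ} (hc : 1 ≤ c) (ht0 : 0 < t) (ht1 : t < 1) :
    ∃ q : ℕ → ℕ, Tendsto q atTop atTop ∧
      Tendsto (fun n : ℕ => ((q n ^ 2 : ℕ) : ℝ) / n) atTop (𝓝 t) ∧
      ∀ᶠ n : ℕ in atTop, ((q n ^ 2 : ℕ) : ℤ) + 2 * q n + 2 * mesh c (q n) ≤ n := by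
  set q : ℕ → ℕ := fun n => Nat.sqrt ⌊t * n⌋₊ with hq
  have hfl : Tendsto (fun n : ℕ => ⌊t * (n : ℝ)⌋₊) atTop atTop :=
    tendsto_nat_floor_atTop.comp (tendsto_natCast_atTop_atTop.const_mul_atTop ht0)
  have hqtop : Tendsto q atTop atTop := tendsto_nat_sqrt.comp hfl
  have hqlim : Tendsto (fun n : ℕ => ((q n ^ 2 : ℕ) : ℝ) / n) atTop (𝓝 t) := by
    have h1 := (tendsto_nat_floor_mul_div_atTop (R := ℝ) ht0.le).comp
      (tendsto_natCast_atTop_atTop (R := ℝ))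
    have h2 := (tendsto_sqrt_sq_div.comp hfl).mul h1
    rw [one_mul] at h2
    refine h2.congr' ?_
    filter_upwards [hfl.eventually_gt_atTop 0] with n hn
    have hn' : ((⌊t * (n : ℝ)⌋₊ : ℕ) : ℝ) ≠ 0 := by positivity
    simp only [Function.comp, hq]
    field_simp
  have hfit : ∀ᶠ n : ℕ in atTop, ((q n ^ 2 : ℕ) : ℤ) + 2 * q n + 2 * mesh c (q n) ≤ n := by
    have h1 : Tendsto (fun q : ℕ => 1 + 2 * (1 / (q : ℝ)) + 2 * ((mesh c q : ℝ) / (q : ℝ) ^ 2))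
        atTop (𝓝 1) := by
      simpa using ((tendsto_one_div_atTop_nhds_zero_nat.const_mul (2 : ℝ)).const_add 1).add
        ((tendsto_mesh hc).const_mul 2)
    have h2 := hqlim.mul (h1.comp hqtop)
    rw [mul_one] at h2
    filter_upwards [h2.eventually_lt_const ht1, hqtop.eventually_gt_atTop 0,
      eventually_gt_atTop 0] with n hn hqn hn0
    have hn' : (0 : ℝ) < n := by exact_mod_cast hn0
    have hq' : (0 : ℝ) < q n := by exact_mod_cast hqn
    simp only [Function.comp] at hn
    rw [div_mul_eq_mul_div, div_lt_one hn'] at hn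
    have e : ((q n ^ 2 : ℕ) : ℝ) * (1 + 2 * (1 / (q n : ℝ)) + 2 * ((mesh c (q n) : ℝ) /
        (q n : ℝ) ^ 2)) = ((q n ^ 2 : ℕ) : ℝ) + 2 * q n + 2 * mesh c (q n) := by
      push_cast
      field_simp
    rw [e] at hn
    exact_mod_cast hn.le
  exact ⟨q, hqtop, hqlim, hfit⟩

end Burning

open Burning in
/-- for `c ≥ 1` and grids `S_n = [-⌈cn⌉, ⌈cn⌉]²`, every
`ρ ∈ [1/(2c²), 1]` is achieved as the burning density of a valid activator
sequence that activates a vertex at every time step. -/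
theorem stmt0 (c : ℝ) (hc : 1 ≤ c) (ρ : ℝ) (hρ₁ : 1 / (2 * c ^ 2) ≤ ρ) (hρ₂ : ρ ≤ 1)
    (V : ℕ → Set (Pt 2)) (hV : ∀ n : ℕ, V n = sqGrid ⌈c * n⌉) :
    ∃ v : ℕ → Option (Pt 2),
      IsActivator V v ∧ IsValid V v ∧ (∀ n, v n ≠ none) ∧
      Filter.Tendsto (densitySeq V v) Filter.atTop (nhds ρ) := by
  obtain ⟨s, hs, hsc, hsρ⟩ := exists_area_eq hc hρ₁ hρ₂
  obtain ⟨J, C, hC, hJV, hJT, hJJ, hJn⟩ := exists_fallback hc hs hsc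
  have hT := target_mem hc hs
  have hga := grows_ceil hc
  have hgR := grows_floor hs
  have ha0 : ∀ n : ℕ, 0 ≤ ⌈c * n⌉ := fun n => Int.ceil_nonneg (by positivity)
  have hR0 : ∀ n : ℕ, 0 ≤ ⌊s * n⌋ := fun n => Int.floor_nonneg.2 (by positivity)
  obtain ⟨v, hact, hval, hsome, hburn, hcover⟩ := exists_activator (V := V) (target c s) J
    (fun n => by rw [hV]; exact (hT n).1) (fun n => by rw [hV]; exact hJV n)
    (fun j k hjk => hJT j k hjk _ (hT j)) hJJ
  refine ⟨v, hact, hval, hsome, ?_⟩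
  have hupper : ∀ n : ℕ, burnSet V v n ⊆ tbox ⌈c * n⌉ (⌊s * n⌋ + C + Nat.sqrt n) := by
    intro n x hx
    refine ⟨by rw [← hV]; exact burnSet_subset hV hga hact n hx, ?_⟩
    obtain ⟨k, hk, hd⟩ := hcover n x hx
    have h1 := hgR k n hk
    have h2 := Nat.sqrt_le_sqrt hk
    have h3 := norm1_le_add_dist1 x (target c s k)
    have h4 := norm1_le_add_dist1 x (J k)
    have h5 := hJn k
    have h6 := (hT k).2
    simp only at h1
    omega
  have hlower : ∀ q n : ℕ, 4 ≤ q → (q ^ 2 : ℕ) + 2 * q + 2 * mesh c q ≤ n →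
      tbox ⌈c * (q ^ 2 : ℕ)⌉ ⌊s * (q ^ 2 : ℕ)⌋ ⊆ burnSet V v n := by
    intro q n hq hqn x hx
    obtain ⟨k, hk1, hk2, hd⟩ := exists_target hc hs hq hx
    have hD := mesh_pos hc q
    exact ball_burned hV hga hact (by omega) (hburn k) (by omega)
  have harea : area c (2 * c) = 4 * c ^ 2 := area_two_mul (by linarith)
  have hc2 : (4 * c ^ 2 : ℝ) ≠ 0 := by positivity
  have hratio : area c s / area c (2 * c) = ρ := by
    rw [harea, hsρ]
    field_simp
  have hVlim : Tendsto (fun n : ℕ => ((V n).ncard : ℝ) / (n : ℝ) ^ 2) atTop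
      (𝓝 (area c (2 * c))) := by
    have h := tendsto_ncard_tbox (f := fun n => ⌈c * n⌉) (g := fun n => 2 * ⌈c * n⌉) ha0
      (fun n => by have := ha0 n; omega) (tendsto_ceil_div c)
      (((tendsto_ceil_div c).const_mul 2).congr fun n => by push_cast; ring)
    refine h.congr fun n => ?_
    rw [tbox_two_mul, hV]
  have hquot : ∀ {F : ℕ → ℕ} {A : ℝ}, Tendsto (fun n : ℕ => (F n : ℝ) / (n : ℝ) ^ 2) atTop (𝓝 A) →
      Tendsto (fun n : ℕ => (F n : ℝ) / (V n).ncard) atTop (𝓝 (A / area c (2 * c))) := by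
    intro F A hF
    refine (hF.div hVlim (by rwa [harea])).congr' ?_
    filter_upwards [eventually_gt_atTop 0] with n hn
    have hn' : (n : ℝ) ^ 2 ≠ 0 := by positivity
    exact div_div_div_cancel_right₀ hn' _ _
  rw [tendsto_order]
  constructor
  · intro b hb
    have hcont : Continuous fun t : ℝ => area (t * c) (t * s) / area c (2 * c) :=
      (continuous_area.comp (by fun_prop : Continuous fun t : ℝ => (t * c, t * s))).div_const _
    -- By continuity, some scaling factor `t < 1` leaves the area of the polygon large enough.
    obtain ⟨t, ht0, ht1, htb⟩ : ∃ t : ℝ, 0 < t ∧ t < 1 ∧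
        b < area (t * c) (t * s) / area c (2 * c) := by
      have h1 : ∀ᶠ t in 𝓝 (1 : ℝ), b < area (t * c) (t * s) / area c (2 * c) :=
        hcont.continuousAt.eventually_const_lt (by simpa [hratio] using hb)
      have h2 : ∀ᶠ t in 𝓝[<] (1 : ℝ), 0 < t :=
        (eventually_gt_nhds one_pos).filter_mono nhdsWithin_le_nhds
      obtain ⟨t, ⟨h3, h4⟩, h5⟩ := (((h1.filter_mono nhdsWithin_le_nhds).and h2).and
        (self_mem_nhdsWithin (a := (1 : ℝ)) (s := Set.Iio 1))).exists
      exact ⟨t, h4, h5, h3⟩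
    obtain ⟨q, hqtop, hqlim, hfit⟩ := exists_times hc ht0 ht1
    have hq2top : Tendsto (fun n => q n ^ 2) atTop atTop :=
      (tendsto_pow_atTop two_ne_zero).comp hqtop
    have hscale : ∀ {f : ℕ → ℤ} {α : ℝ}, Tendsto (fun n : ℕ => (f n : ℝ) / n) atTop (𝓝 α) →
        Tendsto (fun n : ℕ => (f (q n ^ 2) : ℝ) / n) atTop (𝓝 (t * α)) := by
      intro f α hf
      have h := hqlim.mul (hf.comp hq2top)
      refine h.congr' ?_
      filter_upwards [hqtop.eventually_gt_atTop 0] with n hn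
      have hn' : ((q n ^ 2 : ℕ) : ℝ) ≠ 0 := by positivity
      simp only [Function.comp]
      field_simp
    have hlim := hquot (tendsto_ncard_tbox (f := fun n => ⌈c * (q n ^ 2 : ℕ)⌉)
      (g := fun n => ⌊s * (q n ^ 2 : ℕ)⌋) (fun n => ha0 _) (fun n => hR0 _)
      (hscale (f := fun n => ⌈c * n⌉) (tendsto_ceil_div c))
      (hscale (f := fun n => ⌊s * n⌋) (tendsto_floor_div s)))
    filter_upwards [hlim.eventually_const_lt htb, hfit, hqtop.eventually_ge_atTop 4]
      with n h1 h2 h3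
    refine h1.trans_le ?_
    have hfin := (finite_tbox _ _).subset (hupper n)
    have := Set.ncard_le_ncard (hlower (q n) n h3 h2) hfin
    unfold densitySeq
    gcongr
  · intro b hb
    have hg : Tendsto (fun n : ℕ => ((⌊s * n⌋ + C + Nat.sqrt n : ℤ) : ℝ) / n) atTop (𝓝 s) := by
      have h := ((tendsto_floor_div s).add (tendsto_const_div_atTop_nhds_zero_nat (C : ℝ))).add
        tendsto_sqrt_div
      rw [add_zero, add_zero] at h
      refine h.congr fun n => ?_
      push_cast
      ring
    have hlim := hquot (tendsto_ncard_tbox ha0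
      (fun n => by have := hR0 n; omega) (tendsto_ceil_div c) hg)
    rw [hratio] at hlim
    filter_upwards [hlim.eventually_lt_const hb] with n hn
    refine lt_of_le_of_lt ?_ hn
    have := Set.ncard_le_ncard (hupper n) (finite_tbox _ _)
    unfold densitySeq
    gcongr
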